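/- Let m, h > 0, let V : ℝ → ℝ be differentiable, and let q_ℓ, q_m, q_r ∈ ℝ satisfy the midpoint equation q_m − (h²/(8m)) V'(q_m) = (q_ℓ + q_r)/2. Then the right momentum p_r = ∂L_S/∂q_r (q_ℓ, q_m, q_r) satisfies p_r = (m/h)(q_r − q_ℓ) − (h/6)( 2 V'(q_m) + V'(q_r) ). -/

import Mathlib

/-- The Simpson discrete Lagrangian
`L_S(qℓ, qm, qr) = (m h/12)(gℓ² + 4 gm² + gr²) − (h/6)(V(qℓ) + 4 V(qm) + V(qr))`
with `gℓ = (−3 qℓ + 4 qm − qr)/h`, `gm = (qr − qℓ)/h`, `gr = (qℓ − 4 qm + 3 qr)/h`. -/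
noncomputable def simpsonLagrangian (m h : ℝ) (V : ℝ → ℝ) (ql qm qr : ℝ) : ℝ :=
  m * h / 12 * (((-3 * ql + 4 * qm - qr) / h) ^ 2 + 4 * ((qr - ql) / h) ^ 2
      + ((ql - 4 * qm + 3 * qr) / h) ^ 2)
    - h / 6 * (V ql + 4 * V qm + V qr)

/- The kinetic part is expressed through the displacement of `qm` from the midpoint of `ql` and `qr`
because that is the quantity which the midpoint equation prescribes. -/
theorem hasDerivAt_simpsonLagrangian_right (m h : ℝ) {V : ℝ → ℝ} (ql qm : ℝ) {qr Vr' : ℝ}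
    (hVr : HasDerivAt V Vr' qr) :
    HasDerivAt (fun x => simpsonLagrangian m h V ql qm x)
      (m / h * (qr - ql) - 8 * m / (3 * h) * (qm - (ql + qr) / 2) - h / 6 * Vr') qr := by
  have hleft : HasDerivAt (fun x => (-3 * ql + 4 * qm - x) / h) (-1 / h) qr :=
    ((hasDerivAt_id' qr).const_sub _).div_const h
  have hmiddle : HasDerivAt (fun x => (x - ql) / h) (1 / h) qr :=
    ((hasDerivAt_id' qr).sub_const ql).div_const h
  have hright : HasDerivAt (fun x => (ql - 4 * qm + 3 * x) / h) (3 * 1 / h) qr :=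
    (((hasDerivAt_id' qr).const_mul 3).const_add _).div_const h
  have hkinetic :=
    (((hleft.pow 2).add ((hmiddle.pow 2).const_mul 4)).add (hright.pow 2)).const_mul (m * h / 12)
  have hpotential := (hVr.const_add (V ql + 4 * V qm)).const_mul (h / 6)
  refine (hkinetic.sub hpotential).congr_deriv ?_
  push_cast
  field_simp
  ring

theorem simpson_right_momentum_general {m h : ℝ} (hm : m ≠ 0) (_hh : h ≠ 0) {V : ℝ → ℝ}
    {ql qm qr Vm' Vr' : ℝ} (_hVm : HasDerivAt V Vm' qm) (hVr : HasDerivAt V Vr' qr)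
    (hmid : qm - h ^ 2 / (8 * m) * Vm' = (ql + qr) / 2) :
    HasDerivAt (fun x => simpsonLagrangian m h V ql qm x)
      (m / h * (qr - ql) - h / 6 * (2 * Vm' + Vr')) qr := by
  have hdisplacement : qm - (ql + qr) / 2 = h ^ 2 / (8 * m) * Vm' := by linarith
  have hcorrection : 8 * m / (3 * h) * (qm - (ql + qr) / 2) = h / 3 * Vm' := by
    rw [hdisplacement]
    field_simp
  refine (hasDerivAt_simpsonLagrangian_right m h ql qm hVr).congr_deriv ?_
  rw [hcorrection]
  ring

/-- under the midpoint equation, the right momentum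
`p_r = ∂L_S/∂q_r (qℓ, qm, qr)` has the stated closed form. -/
theorem simpson_right_momentum (m h : ℝ) (hm : 0 < m) (hh : 0 < h)
    (V : ℝ → ℝ) (hV : Differentiable ℝ V) (ql qm qr : ℝ)
    (hmid : qm - h ^ 2 / (8 * m) * deriv V qm = (ql + qr) / 2) :
    deriv (fun x => simpsonLagrangian m h V ql qm x) qr
      = m / h * (qr - ql) - h / 6 * (2 * deriv V qm + deriv V qr) :=
  (simpson_right_momentum_general hm.ne' hh.ne' (hV qm).hasDerivAt (hV qr).hasDerivAt hmid).deriv
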